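/- (Consistency is preserved by the GPDR rule INDUCTION.) Suppose the configuration ⟨M ∣ R₀,…,R_N; N⟩ is consistent, i + 1 ≤ N, and a frame R : Q → Val → Prop satisfies: for all q and σ, F(fun q' σ' => R_i q' σ' ∧ R q' σ') q σ implies R q σ. Then the configuration ⟨∅ ∣ R₀', …, R_N'; N⟩ is consistent, where R_j' = fun q σ => R_j q σ ∧ R q σ for 1 ≤ j ≤ i + 1 and R_j' = R_j for j = 0 and i + 1 < j ≤ N. -/

import Mathlib

/-- The jump transition `⟨q, σ₁⟩ →δ ⟨q', σ₂⟩` of a DTSTS. -/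
def Jump {Q V : Type*}
    (δ : Set (Q × ((V → ℝ) → Prop) × ((V → ℝ) → (V → ℝ) → Prop) × Q))
    (q : Q) (σ₁ : V → ℝ) (q' : Q) (σ₂ : V → ℝ) : Prop :=
  ∃ φ φc, (q, φ, φc, q') ∈ δ ∧ φ σ₁ ∧ φc σ₁ σ₂

/-- The forward predicate transformer of the DTSTS `(Q, q₀, φ₀, δ)`. -/
def FTrans {Q V : Type*} (q₀ : Q) (φ₀ : (V → ℝ) → Prop)
    (δ : Set (Q × ((V → ℝ) → Prop) × ((V → ℝ) → (V → ℝ) → Prop) × Q))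
    (R : Q → (V → ℝ) → Prop) : Q → (V → ℝ) → Prop :=
  fun q' σ₂ => (q' = q₀ ∧ φ₀ σ₂) ∨
    ∃ q φ φc σ₁, (q, φ, φc, q') ∈ δ ∧ R q σ₁ ∧ φ σ₁ ∧ φc σ₁ σ₂

/-- Consistency of a GPDR configuration `⟨M ∣ R₀,…,R_N; N⟩` (Definition 8).
Frames are given as `R : ℕ → Q → (V → ℝ) → Prop` (only indices `≤ N` matter),
and the trace `M` is a list of triples `(σ, q, i)`. -/
structure Consistent {Q V : Type*} (q₀ : Q) (φ₀ : (V → ℝ) → Prop)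
    (δ : Set (Q × ((V → ℝ) → Prop) × ((V → ℝ) → (V → ℝ) → Prop) × Q))
    (φP : (V → ℝ) → Prop)
    (R : ℕ → Q → (V → ℝ) → Prop) (N : ℕ)
    (M : List ((V → ℝ) × Q × ℕ)) : Prop where
  /-- (Con-A): `R₀` at `q₀` is the initial condition… -/
  conA₁ : ∀ σ, R 0 q₀ σ ↔ φ₀ σ
  /-- (Con-A): …and is `False` at other locations. -/
  conA₂ : ∀ q, q ≠ q₀ → ∀ σ, ¬ R 0 q σ
  /-- (Con-B): the frames are increasing. -/
  conB : ∀ i, i < N → ∀ q σ, R i q σ → R (i + 1) q σ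
  /-- (Con-C): frames below `N` are safe. -/
  conC : ∀ i, i < N → ∀ q σ, R i q σ → φP σ
  /-- (Con-D): frames are closed under the forward predicate transformer. -/
  conD : ∀ i, i < N → ∀ q σ, FTrans q₀ φ₀ δ (R i) q σ → R (i + 1) q σ
  /-- (Con-E): level-`N` trace entries are in `R_N` and violate safety. -/
  conE : ∀ σ q, (σ, q, N) ∈ M → R N q σ ∧ ¬ φP σ
  /-- (Con-F): consecutive trace entries are connected by a transition. -/
  conF : ∀ k i (σ₁ : V → ℝ) (q₁ : Q) (σ₂ : V → ℝ) (q₂ : Q), i < N →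
    M[k]? = some (σ₁, q₁, i) → M[k + 1]? = some (σ₂, q₂, i + 1) →
    ∃ φ φc, (q₁, φ, φc, q₂) ∈ δ ∧ R i q₁ σ₁ ∧ φ σ₁ ∧ φc σ₁ σ₂

/-!
Order frames pointwise by implication, so that conjunction is `⊓` and the forward transformer `F` is
monotone. Since `R₀` consists of initial states, it lies below every value of `F`, hence
`R₀ ≤ F (Rᵢ ⊓ Rg) ≤ Rg`, and leaving `R₀` untouched is the same as strengthening it. For `j ≤ i` the
strengthened frame lies below `Rᵢ ⊓ Rg`, so its image under `F` lies below `Rg` as well as below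
`R_{j+1}`.
-/

section StrengthenedFrames

variable {α : Type*} [SemilatticeInf α] {R : ℕ → α} {a b : α} {n j : ℕ}

/-- The sequence obtained from `R` by meeting the terms of index `1, …, n` with `a`. With
`n = i + 1`, these are the frames produced by the rule INDUCTION at level `i`. -/
def strengthenUpTo (R : ℕ → α) (a : α) (n : ℕ) : ℕ → α :=
  fun j => if 1 ≤ j ∧ j ≤ n then R j ⊓ a else R j

theorem strengthenUpTo_zero : strengthenUpTo R a n 0 = R 0 :=
  if_neg (by omega)

theorem strengthenUpTo_le : strengthenUpTo R a n j ≤ R j := by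
  unfold strengthenUpTo
  split_ifs
  exacts [inf_le_left, le_rfl]

theorem strengthenUpTo_le_right (hzero : R 0 ≤ a) (hj : j ≤ n) : strengthenUpTo R a n j ≤ a := by
  rcases Nat.eq_zero_or_pos j with rfl | hpos
  · exact strengthenUpTo_zero.trans_le hzero
  · exact (if_pos ⟨hpos, hj⟩).trans_le inf_le_right

theorem le_strengthenUpTo (hR : b ≤ R j) (ha : j ≤ n → b ≤ a) : b ≤ strengthenUpTo R a n j := by
  unfold strengthenUpTo
  split_ifs with hj
  exacts [le_inf hR (ha hj.2), hR]

theorem strengthenUpTo_le_succ (hzero : R 0 ≤ a) (hR : R j ≤ R (j + 1)) :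
    strengthenUpTo R a n j ≤ strengthenUpTo R a n (j + 1) :=
  le_strengthenUpTo (strengthenUpTo_le.trans hR) fun hj =>
    strengthenUpTo_le_right hzero (Nat.le_of_succ_le hj)

theorem map_strengthenUpTo_le_succ {F : α → α} (hF : Monotone F) {N i : ℕ}
    (hR : MonotoneOn R (Set.Iic N)) (hzero : R 0 ≤ a) (hi : i ≤ N)
    (hind : F (R i ⊓ a) ≤ a) (hstep : F (R j) ≤ R (j + 1)) :
    F (strengthenUpTo R a (i + 1) j) ≤ strengthenUpTo R a (i + 1) (j + 1) := by
  refine le_strengthenUpTo ((hF strengthenUpTo_le).trans hstep) fun hj => ?_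
  have hji : j ≤ i := Nat.le_of_succ_le_succ hj
  have hle : strengthenUpTo R a (i + 1) j ≤ R i ⊓ a :=
    le_inf (strengthenUpTo_le.trans (hR (hji.trans hi) hi hji))
      (strengthenUpTo_le_right hzero (Nat.le_succ_of_le hji))
  exact (hF hle).trans hind

end StrengthenedFrames

section Configurations

variable {Q V : Type*} {q₀ : Q} {φ₀ : (V → ℝ) → Prop}
  {δ : Set (Q × ((V → ℝ) → Prop) × ((V → ℝ) → (V → ℝ) → Prop) × Q)}
  {φP : (V → ℝ) → Prop} {R : ℕ → Q → (V → ℝ) → Prop} {N : ℕ} {M : List ((V → ℝ) × Q × ℕ)}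

theorem fTrans_monotone : Monotone (FTrans q₀ φ₀ δ) := by
  rintro S T hST q' σ₂ (hinit | ⟨q, φ, φc, σ₁, hδ, hS, hφ, hφc⟩)
  · exact Or.inl hinit
  · exact Or.inr ⟨q, φ, φc, σ₁, hδ, hST q σ₁ hS, hφ, hφc⟩

namespace Consistent

theorem monotoneOn_frames (hcons : Consistent q₀ φ₀ δ φP R N M) : MonotoneOn R (Set.Iic N) :=
  monotoneOn_of_le_add_one Set.ordConnected_Iic fun j _ _ hj => hcons.conB j hj

theorem frame_zero_le_fTrans (hcons : Consistent q₀ φ₀ δ φP R N M) (S : Q → (V → ℝ) → Prop) :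
    R 0 ≤ FTrans q₀ φ₀ δ S := by
  intro q σ hσ
  obtain rfl : q = q₀ := by_contra fun hq => hcons.conA₂ q hq σ hσ
  exact Or.inl ⟨rfl, (hcons.conA₁ σ).1 hσ⟩

end Consistent

theorem consistent_induction_general {i : ℕ} {Rg : Q → (V → ℝ) → Prop}
    (hcons : Consistent q₀ φ₀ δ φP R N M) (hi : i ≤ N)
    (hind : FTrans q₀ φ₀ δ (R i ⊓ Rg) ≤ Rg) :
    Consistent q₀ φ₀ δ φP (strengthenUpTo R Rg (i + 1)) N [] := by
  have hzero : R 0 ≤ Rg := (hcons.frame_zero_le_fTrans _).trans hind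
  have hle (j : ℕ) : strengthenUpTo R Rg (i + 1) j ≤ R j := strengthenUpTo_le
  exact {
    conA₁ := strengthenUpTo_zero (R := R) ▸ hcons.conA₁
    conA₂ := strengthenUpTo_zero (R := R) ▸ hcons.conA₂
    conB := fun j hj => strengthenUpTo_le_succ hzero (hcons.conB j hj)
    conC := fun j hj q σ hσ => hcons.conC j hj q σ (hle j q σ hσ)
    conD := fun j hj =>
      map_strengthenUpTo_le_succ fTrans_monotone hcons.monotoneOn_frames hzero hi hind
        (hcons.conD j hj)
    conE := by simp
    conF := by simp }

end Configurations

/-- Consistency is preserved by the GPDR rule INDUCTION. -/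
theorem consistent_induction {Q V : Type*} [Fintype V]
    (q₀ : Q) (φ₀ : (V → ℝ) → Prop)
    (δ : Set (Q × ((V → ℝ) → Prop) × ((V → ℝ) → (V → ℝ) → Prop) × Q))
    (φP : (V → ℝ) → Prop)
    (R : ℕ → Q → (V → ℝ) → Prop) (N i : ℕ)
    (M : List ((V → ℝ) × Q × ℕ))
    (Rg : Q → (V → ℝ) → Prop)
    (hcons : Consistent q₀ φ₀ δ φP R N M)
    (hiN : i + 1 ≤ N)
    (hind : ∀ q σ, FTrans q₀ φ₀ δ (fun q' σ' => R i q' σ' ∧ Rg q' σ') q σ → Rg q σ) :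
    Consistent q₀ φ₀ δ φP
      (fun j => if 1 ≤ j ∧ j ≤ i + 1 then (fun q σ => R j q σ ∧ Rg q σ) else R j)
      N ([] : List ((V → ℝ) × Q × ℕ)) :=
  consistent_induction_general hcons (Nat.le_of_succ_le hiN) hind
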